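/- Let R be a commutative ring and x, y ∈ R. Then for every n ≥ 0, L_n·L_{n+4} − L_{n+1}·L_{n+3} = (−1)ⁿ·(x⁴·yⁿ + 5·x²·y^{n+1} + 4·y^{n+2}). -/

import Mathlib

/-- Bivariate Lucas polynomials: `L 0 = 2`, `L 1 = x`, `L (n+2) = x*L (n+1) + y*L n`. -/
def bL {R : Type*} [CommRing R] (x y : R) : ℕ → R
  | 0 => 2
  | 1 => x
  | n + 2 => x * bL x y (n + 1) + y * bL x y n

/-!
The Casoratian of two solutions of `w (n + 2) = x * w (n + 1) + y * w n` is geometric of ratio `-y`,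
the determinant of the companion matrix of the recurrence. Since the recurrence is invariant under
translation, this applies to the sequence `L` and its shift by `3`, whose Casoratian at `n` is
`L n * L (n + 4) - L (n + 1) * L (n + 3)`; its value at `0` gives the polynomial factor.
-/

/-- The Casoratian of two sequences, the discrete analogue of the Wronskian. -/
def casoratian {R : Type*} [CommRing R] (u v : ℕ → R) (n : ℕ) : R :=
  u n * v (n + 1) - u (n + 1) * v n

section Casoratian

variable {R : Type*} [CommRing R] {x y : R} {u v : ℕ → R}

theorem casoratian_succ {n : ℕ} (hu : u (n + 2) = x * u (n + 1) + y * u n)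
    (hv : v (n + 2) = x * v (n + 1) + y * v n) :
    casoratian u v (n + 1) = -y * casoratian u v n := by
  simp only [casoratian, hu, hv]
  ring

theorem casoratian_eq_pow_mul (hu : ∀ n, u (n + 2) = x * u (n + 1) + y * u n)
    (hv : ∀ n, v (n + 2) = x * v (n + 1) + y * v n) (n : ℕ) :
    casoratian u v n = (-y) ^ n * casoratian u v 0 := by
  induction n with
  | zero => rw [pow_zero, one_mul]
  | succ n ih => rw [casoratian_succ (hu n) (hv n), ih, pow_succ', mul_assoc]

end Casoratian

section Lucas

variable {R : Type*} [CommRing R] (x y : R)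

theorem bL_add_two (n : ℕ) : bL x y (n + 2) = x * bL x y (n + 1) + y * bL x y n := by
  rw [bL]

theorem bL_mul_bL_sub_bL_mul_bL (m n : ℕ) :
    bL x y n * bL x y (n + m + 1) - bL x y (n + 1) * bL x y (n + m) =
      (-y) ^ n * (2 * bL x y (m + 1) - x * bL x y m) := by
  have shift_add_two (k : ℕ) :
      bL x y (k + 2 + m) = x * bL x y (k + 1 + m) + y * bL x y (k + m) := by
    simpa only [Nat.add_right_comm] using bL_add_two x y (k + m)
  have h := casoratian_eq_pow_mul (v := fun k ↦ bL x y (k + m)) (bL_add_two x y) shift_add_two n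
  simpa only [casoratian, bL, zero_add, Nat.add_right_comm n 1 m, Nat.add_comm 1 m] using h

end Lucas

/-- For every `n ≥ 0`,
`L n L (n+4) − L (n+1) L (n+3) = (−1)ⁿ (x⁴ yⁿ + 5 x² y^(n+1) + 4 y^(n+2))`. -/
theorem lucas_catalan {R : Type*} [CommRing R] (x y : R) :
    ∀ n : ℕ,
      bL x y n * bL x y (n + 4) - bL x y (n + 1) * bL x y (n + 3) =
        (-1) ^ n * (x ^ 4 * y ^ n + 5 * x ^ 2 * y ^ (n + 1) + 4 * y ^ (n + 2)) := by
  intro n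
  have initial_value : 2 * bL x y 4 - x * bL x y 3 = x ^ 4 + 5 * x ^ 2 * y + 4 * y ^ 2 := by
    simp only [bL]
    ring
  calc
    bL x y n * bL x y (n + 4) - bL x y (n + 1) * bL x y (n + 3)
    _ = (-y) ^ n * (2 * bL x y 4 - x * bL x y 3) := bL_mul_bL_sub_bL_mul_bL x y 3 n
    _ = (-1) ^ n * y ^ n * (x ^ 4 + 5 * x ^ 2 * y + 4 * y ^ 2) := by rw [initial_value, neg_pow]
    _ = (-1) ^ n * (x ^ 4 * y ^ n + 5 * x ^ 2 * y ^ (n + 1) + 4 * y ^ (n + 2)) := by ring
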